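/- (Percentile formula.) Assume Λ ≠ 0 and let L̄ = Φ(Ξ/(ζ√T) − ΛY/ζ), where Y is standard normal. Then for every ν ∈ (0,1), the value L_ν = Φ((Σ·Φ⁻¹(p) + |Λ|·Φ⁻¹(ν))/ζ) satisfies ℙ[L̄ ≤ L_ν] = ν, where p = Φ(Ξ/(Σ√T)). -/

import Mathlib

open MeasureTheory ProbabilityTheory Real Filter Set

/-- The density of the standard normal distribution. -/
noncomputable def stdPdf (y : ℝ) : ℝ := Real.exp (-y ^ 2 / 2) / Real.sqrt (2 * Real.pi)

/-- The cumulative distribution function `Φ` of the standard normal distribution. -/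
noncomputable def stdCdf (x : ℝ) : ℝ := ∫ y in Set.Iic x, stdPdf y

/-- The inverse `Φ⁻¹` of the standard normal cumulative distribution function: since `stdCdf`
is injective, `stdCdfInv` is the genuine inverse of `Φ` on `(0,1)`. -/
noncomputable def stdCdfInv : ℝ → ℝ := Function.invFun stdCdf

lemma stdPdf_eq (y : ℝ) : stdPdf y = gaussianPDFReal 0 1 y := by
  simp only [stdPdf, gaussianPDFReal, NNReal.coe_one, mul_one, sub_zero]
  rw [div_eq_inv_mul]

lemma stdPdf_integrable : Integrable stdPdf := by
  have : stdPdf = gaussianPDFReal 0 1 := funext stdPdf_eq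
  rw [this]; exact integrable_gaussianPDFReal 0 1

lemma stdPdf_pos (y : ℝ) : 0 < stdPdf y := by
  unfold stdPdf; positivity

lemma gaussian_Iic (x : ℝ) : gaussianReal 0 1 (Iic x) = ENNReal.ofReal (stdCdf x) := by
  rw [gaussianReal_apply_eq_integral 0 one_ne_zero]
  simp only [stdCdf, stdPdf_eq]

lemma stdCdf_eq_cdf : stdCdf = cdf (gaussianReal 0 1) := by
  funext x
  rw [cdf_eq_real, Measure.real, gaussian_Iic, ENNReal.toReal_ofReal]
  exact integral_nonneg fun y => (stdPdf_pos y).le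

lemma stdCdf_sub (a b : ℝ) : stdCdf b - stdCdf a = ∫ y in a..b, stdPdf y :=
  intervalIntegral.integral_Iic_sub_Iic stdPdf_integrable.integrableOn
    stdPdf_integrable.integrableOn

lemma stdCdf_strictMono : StrictMono stdCdf := by
  intro a b hab
  have h : 0 < ∫ y in a..b, stdPdf y :=
    intervalIntegral.intervalIntegral_pos_of_pos
      stdPdf_integrable.intervalIntegrable stdPdf_pos hab
  have := stdCdf_sub a b
  linarith

lemma stdCdf_continuous : Continuous stdCdf := by
  have h : stdCdf = fun x => stdCdf 0 + ∫ y in (0 : ℝ)..x, stdPdf y := by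
    funext x
    have := stdCdf_sub 0 x
    linarith
  rw [h]
  exact continuous_const.add (intervalIntegral.continuous_primitive
    (fun _ _ => stdPdf_integrable.intervalIntegrable) 0)

lemma stdCdf_surj {ν : ℝ} (hν : ν ∈ Ioo (0 : ℝ) 1) : ∃ x, stdCdf x = ν := by
  have hb := tendsto_cdf_atBot (gaussianReal 0 1)
  have ht := tendsto_cdf_atTop (gaussianReal 0 1)
  rw [← stdCdf_eq_cdf] at hb ht
  obtain ⟨a, ha⟩ := (hb.eventually (gt_mem_nhds hν.1)).exists
  obtain ⟨b, hb⟩ := (ht.eventually (lt_mem_nhds hν.2)).exists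
  exact mem_range_of_exists_le_of_exists_ge stdCdf_continuous ⟨a, ha.le⟩ ⟨b, hb.le⟩

/-- percentile formula: if `Λ ≠ 0` and `L̄ = Φ(Ξ/(ζ√T) − ΛY/ζ)` with `Y`
standard normal, then for every `ν ∈ (0,1)` the value
`L_ν = Φ((ΣΦ⁻¹(p) + |Λ|Φ⁻¹(ν))/ζ)` satisfies `ℙ[L̄ ≤ L_ν] = ν`, where `p = Φ(Ξ/(Σ√T))`. -/
theorem percentile_formula
    {Ω : Type*} [MeasurableSpace Ω] (P : Measure Ω) [IsProbabilityMeasure P]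
    (T A B μ α σ β ρ θ : ℝ)
    (hT : 0 < T) (hA : 0 < A) (hB : 0 < B) (hσ : 0 < σ) (hβ : 0 < β)
    (hρ : ρ ∈ Set.Icc (0 : ℝ) 1) (hθ : θ ∈ Set.Icc (0 : ℝ) 1)
    (Y : Ω → ℝ) (hmY : Measurable Y)
    (hY : Measure.map Y P = gaussianReal 0 1)
    (Sg Ξ ζ Λ : ℝ)
    (hSg : Sg = Real.sqrt (σ ^ 2 + β ^ 2 - 2 * σ * β * Real.sqrt (ρ * θ)))
    (hΞ : Ξ = Real.log (B / A) - (μ - α - (σ ^ 2 - β ^ 2) / 2) * T)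
    (hζ : ζ = Real.sqrt (σ ^ 2 * (1 - ρ) + β ^ 2 * (1 - θ)))
    (hΛ : Λ = σ * Real.sqrt ρ - β * Real.sqrt θ)
    (hSgpos : 0 < Sg) (hζpos : 0 < ζ) (hΛne : Λ ≠ 0)
    (p : ℝ) (hp : p = stdCdf (Ξ / (Sg * Real.sqrt T)))
    (ν : ℝ) (hν : ν ∈ Set.Ioo (0 : ℝ) 1)
    (Lν : ℝ) (hLν : Lν = stdCdf ((Sg * stdCdfInv p + |Λ| * stdCdfInv ν) / ζ)) :
    P {ω | stdCdf (Ξ / (ζ * Real.sqrt T) - Λ * Y ω / ζ) ≤ Lν} = ENNReal.ofReal ν := by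
  have h1 : stdCdfInv p = Ξ / (Sg * Real.sqrt T) := by
    rw [hp]; exact Function.leftInverse_invFun stdCdf_strictMono.injective _
  have h2 : stdCdf (stdCdfInv ν) = ν := Function.invFun_eq (stdCdf_surj hν)
  generalize stdCdfInv ν = z at h2 hLν
  have hT' : 0 < Real.sqrt T := Real.sqrt_pos.2 hT
  have e1 : (Sg * stdCdfInv p + |Λ| * z) / ζ = Ξ / (ζ * Real.sqrt T) + |Λ| * z / ζ := by
    rw [h1]; field_simp
  have hset : {ω | stdCdf (Ξ / (ζ * Real.sqrt T) - Λ * Y ω / ζ) ≤ Lν}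
      = Y ⁻¹' {y | -(Λ * y) ≤ |Λ| * z} := by
    ext ω
    simp only [mem_setOf_eq, mem_preimage]
    rw [hLν, stdCdf_strictMono.le_iff_le, e1, sub_eq_add_neg, add_le_add_iff_left, ← neg_div,
      div_le_div_iff_of_pos_right hζpos]
  have hms : MeasurableSet {y : ℝ | -(Λ * y) ≤ |Λ| * z} :=
    measurableSet_le (by fun_prop) (by fun_prop)
  rw [hset, ← Measure.map_apply hmY hms, hY, ← h2, ← gaussian_Iic]
  rcases lt_or_gt_of_ne hΛne with h | h
  · congr 1
    ext y
    simp only [mem_setOf_eq, mem_Iic, abs_of_neg h, ← neg_mul]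
    exact mul_le_mul_iff_right₀ (by linarith)
  · have hn : Measure.map (fun x : ℝ => -x) (gaussianReal 0 1) = gaussianReal 0 1 := by
      rw [gaussianReal_map_neg, neg_zero]
    conv_rhs => rw [← hn, Measure.map_apply measurable_neg measurableSet_Iic]
    congr 1
    ext y
    simp only [mem_setOf_eq, mem_preimage, mem_Iic, abs_of_pos h, ← mul_neg]
    exact mul_le_mul_iff_right₀ h
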